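/- Let R be a commutative ring and let z_1, z_2, z_3 : ℤ → R be arbitrary functions. For m ≥ 1 and s ∈ ℤ define the one-row sum H_m(s) := Σ_{1 ≤ i_1 ≤ i_2 ≤ … ≤ i_m ≤ 3} ∏_{k=1}^m z_{i_k}(s + 2(k−1)), and set H_0(s) := 1 and H_m(s) := 0 for m < 0. Then for every skew Young diagram μ/λ with d rows and every s ∈ ℤ, the sum over all semistandard skew tableaux tab of shape μ/λ of the products ∏_{cells (j,c) of μ/λ} z_{tab(j,c)}(s + 2(c−1) − 2(j−1)) equals the determinant det_{1 ≤ j,k ≤ d} ( H_{μ_j − λ_k − j + k}( s + 2λ_k − 2(k−1) ) ). -/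

import Mathlib

open scoped Classical

noncomputable section

/-- The one-row sum `H_m(s)` for `m : ℕ`: sum over weakly increasing sequences
`i_1 ≤ … ≤ i_m` with entries in `{1,2,3}` (here modelled by `Fin 3`) of the products
`∏_{k=1}^m z_{i_k}(s + 2(k-1))`. -/
def oneRowSum {R : Type*} [CommRing R] (z : Fin 3 → ℤ → R) (m : ℕ) (s : ℤ) : R :=
  ∑ f ∈ Finset.univ.filter (fun f : Fin m → Fin 3 => Monotone f),
    ∏ k : Fin m, z (f k) (s + 2 * ((k : ℕ) : ℤ))

/-- `H_m(s)` for `m : ℤ`: the one-row sum for `m ≥ 0` (which is `1` for `m = 0`),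
and `0` for `m < 0`. -/
def Hrow {R : Type*} [CommRing R] (z : Fin 3 → ℤ → R) (m : ℤ) (s : ℤ) : R :=
  if 0 ≤ m then oneRowSum z m.toNat s else 0

/-- The weight of a horizontal run covering the positions in `(a, b]`; zero unless `a ≤ b`. -/
def runWeight {R : Type*} [CommRing R] (w : ℤ → R) (a b : ℤ) : R :=
  if a ≤ b then ∏ p ∈ Finset.Ioc a b, w p else 0

theorem prod_Ioc_mul_prod_Ioc {R : Type*} [CommRing R] (w : ℤ → R) {a b c : ℤ}
    (hab : a ≤ b) (hbc : b ≤ c) :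
    (∏ p ∈ Finset.Ioc a b, w p) * ∏ p ∈ Finset.Ioc b c, w p = ∏ p ∈ Finset.Ioc a c, w p := by
  rw [← Finset.prod_union]
  · congr 1
    ext p
    simp only [Finset.mem_union, Finset.mem_Ioc]
    omega
  · rw [Finset.disjoint_left]
    intro p
    simp only [Finset.mem_Ioc]
    omega

/-- The Cauchy–Binet formula, with the minors indexed by strictly decreasing tuples. -/
theorem det_sum_mul_eq_sum_strictAnti {R α : Type*} [CommRing R] [LinearOrder α] {d : ℕ}
    (S : Finset α) (A : Fin d → α → R) (B : α → Fin d → R) :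
    Matrix.det (Matrix.of fun i j => ∑ x ∈ S, A i x * B x j) =
      ∑ p ∈ (Fintype.piFinset fun _ : Fin d => S).filter StrictAnti,
        Matrix.det (Matrix.of fun i j => A i (p j)) *
          Matrix.det (Matrix.of fun i j => B (p i) j) := by
  have expand : Matrix.det (Matrix.of fun i j => ∑ x ∈ S, A i x * B x j) =
      ∑ r ∈ Fintype.piFinset fun _ : Fin d => S,
        (∏ i, A i (r i)) * Matrix.det (Matrix.of fun i j => B (r i) j) := by
    have rows : (Matrix.of fun i j => ∑ x ∈ S, A i x * B x j) =
        fun i => ∑ x ∈ S, A i x • B x := by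
      ext i j
      simp [Finset.sum_apply]
    have := (Matrix.detRowAlternating (n := Fin d) (R := R)).toMultilinearMap.map_sum_finset
      (fun i x => A i x • B x) (fun _ => S)
    rw [rows]
    refine this.trans (Finset.sum_congr rfl fun r _ => ?_)
    exact (Matrix.detRowAlternating (n := Fin d) (R := R)).toMultilinearMap.map_smul_univ
      (fun i => A i (r i)) (fun i => B (r i))
  have inj : ∑ r ∈ Fintype.piFinset fun _ : Fin d => S,
        (∏ i, A i (r i)) * Matrix.det (Matrix.of fun i j => B (r i) j) =
      ∑ r ∈ (Fintype.piFinset fun _ : Fin d => S).filter Function.Injective,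
        (∏ i, A i (r i)) * Matrix.det (Matrix.of fun i j => B (r i) j) := by
    refine (Finset.sum_filter_of_ne fun r _ hr i j hij => ?_).symm
    by_contra hne
    refine hr ?_
    rw [Matrix.det_zero_of_row_eq hne, mul_zero]
    ext k
    simp [hij]
  have factor : ∀ p : Fin d → α,
      Matrix.det (Matrix.of fun i j => A i (p j)) * Matrix.det (Matrix.of fun i j => B (p i) j) =
        ∑ σ : Equiv.Perm (Fin d), (∏ i, A i (p (σ i))) *
          Matrix.det (Matrix.of fun i j => B (p (σ i)) j) := by
    intro p
    rw [← Matrix.det_transpose, Matrix.det_apply', Finset.sum_mul]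
    refine Finset.sum_congr rfl fun σ _ => ?_
    have := Matrix.det_permute σ (Matrix.of fun i j => B (p i) j)
    have hsub : (Matrix.of fun i j => B (p (σ i)) j) =
      (Matrix.of fun i j => B (p i) j).submatrix σ id := rfl
    rw [hsub, this]
    simp only [Matrix.transpose_apply, Matrix.of_apply]
    ring
  rw [expand, inj, Finset.sum_congr rfl fun p _ => factor p, ← Finset.sum_product']
  refine (Finset.sum_bij (fun q _ => q.1 ∘ q.2) ?_ ?_ ?_ ?_).symm
  · rintro ⟨p, σ⟩ h
    simp only [Finset.mem_product, Finset.mem_filter, Fintype.mem_piFinset, Finset.mem_univ,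
      and_true] at h ⊢
    exact ⟨fun i => h.1 _, h.2.injective.comp σ.injective⟩
  · rintro ⟨p, σ⟩ h ⟨p', σ'⟩ h' heq
    simp only [Finset.mem_product, Finset.mem_filter, Fintype.mem_piFinset, Finset.mem_univ,
      and_true] at h h' heq
    have hp : p = p' := by
      have hr : Set.range p = Set.range p' := by
        rw [← σ.surjective.range_comp p, ← σ'.surjective.range_comp p', heq]
      exact (StrictAnti.range_inj h.2 h'.2).1 hr
    subst hp
    refine Prod.ext rfl (Equiv.ext fun i => h.2.injective (congrFun heq i))
  · intro r hr
    simp only [Finset.mem_filter, Fintype.mem_piFinset] at hr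
    let τ := Tuple.sort (OrderDual.toDual ∘ r)
    have hτ : Antitone (r ∘ τ) := Tuple.monotone_sort (OrderDual.toDual ∘ r)
    refine ⟨(r ∘ τ, τ⁻¹), ?_, ?_⟩
    · simp only [Finset.mem_product, Finset.mem_filter, Fintype.mem_piFinset, Finset.mem_univ,
        and_true]
      exact ⟨fun i => hr.1 _, hτ.strictAnti_of_injective (hr.2.comp τ.injective)⟩
    · ext i
      simp
  · intros
    rfl

/-- The tuple `b` is obtained from `a` by adding a horizontal strip. -/
def Interlaces {d : ℕ} (a b : Fin d → ℤ) : Prop :=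
  (∀ i, a i ≤ b i) ∧ ∀ i j, i < j → b j < a i

theorem Interlaces.strictAnti {d : ℕ} {a b : Fin d → ℤ} (h : Interlaces a b) : StrictAnti b :=
  fun i j hij => (h.2 i j hij).trans_le (h.1 i)

/-- A minor of the single-letter transfer matrix is the product of its diagonal entries if the
two tuples interlace, and zero otherwise. -/
theorem det_runWeight {R : Type*} [CommRing R] (w : ℤ → R) {d : ℕ} {a b : Fin d → ℤ}
    (ha : StrictAnti a) (hb : StrictAnti b) :
    Matrix.det (Matrix.of fun i j => runWeight w (a i) (b j)) =
      if Interlaces a b then ∏ i, runWeight w (a i) (b i) else 0 := by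
  by_cases h : ∀ i j, i < j → b j < a i
  · rw [Matrix.det_of_isLowerTriangular]
    · split_ifs with h'
      · rfl
      · obtain ⟨i, hi⟩ : ∃ i, ¬ a i ≤ b i := by
          by_contra! hc
          exact h' ⟨hc, h⟩
        exact Finset.prod_eq_zero (Finset.mem_univ i) (if_neg hi)
    · intro i j hij
      exact if_neg (not_le.2 (h i j hij))
  · rw [if_neg fun hI => h hI.2]
    push Not at h
    have hex : ∃ n : ℕ, ∃ j : Fin d, (j : ℕ) = n ∧ ∃ i, i < j ∧ a i ≤ b j := by
      obtain ⟨i, j, hij⟩ := h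
      exact ⟨j, j, rfl, i, hij⟩
    obtain ⟨j, hjn, i, hij, hle⟩ := Nat.find_spec hex
    have hmin : ∀ k, k < i → b i < a k := by
      intro k hk
      by_contra hc
      refine Nat.find_min hex (m := i) ?_ ⟨i, rfl, k, hk, not_lt.1 hc⟩
      rw [← hjn]
      exact hij
    have hbij := hb hij
    set M := Matrix.of fun i j => runWeight w (a i) (b j) with hM
    have hcol : M = M.updateCol i ((∏ p ∈ Finset.Ioc (b j) (b i), w p) • fun k => M k j) := by
      ext k l
      rw [Matrix.updateCol_apply]
      split_ifs with hl
      · subst hl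
        simp only [hM, Matrix.of_apply, Pi.smul_apply, smul_eq_mul, runWeight]
        by_cases hk : k < l
        · have := hmin k hk
          rw [if_neg (by omega), if_neg (by omega), mul_zero]
        · have := ha.antitone (not_lt.1 hk)
          rw [if_pos (by omega), if_pos (by omega), mul_comm,
            prod_Ioc_mul_prod_Ioc w (by omega) (by omega)]
      · rfl
    rw [hcol, Matrix.det_updateCol_smul, Matrix.det_zero_of_column_eq hij.ne, mul_zero]
    intro k
    rw [Matrix.updateCol_self, Matrix.updateCol_ne hij.ne.symm]

/-- The weakly increasing filling with letter `0` up to position `x`, letter `1` up to `y`, and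
letter `2` afterwards. -/
def thresholdFill (x y c : ℤ) : Fin 3 :=
  if c ≤ x then 0 else if c ≤ y then 1 else 2

theorem thresholdFill_mono (x y : ℤ) : Monotone (thresholdFill x y) := by
  intro c c' hc
  unfold thresholdFill
  split_ifs <;> omega

theorem thresholdFill_eq_zero {x y c : ℤ} : thresholdFill x y c = 0 ↔ c ≤ x := by
  unfold thresholdFill
  split_ifs <;> simp_all

theorem thresholdFill_le_one {x y c : ℤ} (h : x ≤ y) : thresholdFill x y c ≤ 1 ↔ c ≤ y := by
  unfold thresholdFill
  split_ifs <;> simp <;> omega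

theorem prod_thresholdFill {R : Type*} [CommRing R] (w : Fin 3 → ℤ → R) {a x y b : ℤ}
    (hax : a ≤ x) (hxy : x ≤ y) (hyb : y ≤ b) :
    ∏ p ∈ Finset.Ioc a b, w (thresholdFill x y p) p =
      runWeight (w 0) a x * (runWeight (w 1) x y * runWeight (w 2) y b) := by
  rw [runWeight, runWeight, runWeight, if_pos hax, if_pos hxy, if_pos hyb,
    ← prod_Ioc_mul_prod_Ioc _ hax (hxy.trans hyb), ← prod_Ioc_mul_prod_Ioc _ hxy hyb]
  congr 1
  · refine Finset.prod_congr rfl fun p hp => ?_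
    rw [Finset.mem_Ioc] at hp
    rw [thresholdFill, if_pos hp.2]
  congr 1
  all_goals
    refine Finset.prod_congr rfl fun p hp => ?_
    rw [Finset.mem_Ioc] at hp
    unfold thresholdFill
    split_ifs <;> first | rfl | omega

/-- An initial segment of `(a, b]` is cut out by a threshold. -/
theorem exists_threshold {a b : ℤ} (hab : a ≤ b) (P : ℤ → Prop)
    (hP : ∀ c c', a < c → c ≤ c' → c' ≤ b → P c' → P c) :
    ∃ x, a ≤ x ∧ x ≤ b ∧ ∀ c, a < c → c ≤ b → (P c ↔ c ≤ x) := by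
  obtain ⟨x, ⟨hax, hxb, hx⟩, hmax⟩ := Int.exists_greatest_of_bdd
    (P := fun x => a ≤ x ∧ x ≤ b ∧ (a < x → P x)) ⟨b, fun z hz => hz.2.1⟩
    ⟨a, le_rfl, hab, fun h => absurd h (lt_irrefl _)⟩
  refine ⟨x, hax, hxb, fun c hac hcb => ⟨fun hc => hmax c ⟨hac.le, hcb, fun _ => hc⟩,
    fun hc => hP c x hac hc hxb (hx (by omega))⟩⟩

/-- Every weakly increasing filling of a row occupying the positions `(a, b]` is given by
thresholds. -/
theorem exists_thresholdFill {ι : Type*} {a b : ℤ} (hab : a ≤ b) (pos : ι → ℤ)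
    (hpos : ∀ c, a < c ∧ c ≤ b ↔ ∃ i, pos i = c) (f : ι → Fin 3)
    (hf : ∀ i j, pos i ≤ pos j → f i ≤ f j) :
    ∃ x y, a ≤ x ∧ x ≤ y ∧ y ≤ b ∧ ∀ i, thresholdFill x y (pos i) = f i := by
  obtain ⟨x, hax, hxb, hx⟩ := exists_threshold hab (fun c => ∀ i, pos i = c → f i = 0) (by
    intro c c' hc hcc hcb h i hi
    obtain ⟨j, hj⟩ := (hpos c').1 ⟨by omega, hcb⟩
    have h1 := h j hj
    have h2 := hf i j (by omega)
    rw [h1] at h2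
    exact Fin.le_zero_iff.1 h2)
  obtain ⟨y, hay, hyb, hy⟩ := exists_threshold hab (fun c => ∀ i, pos i = c → f i ≤ 1) (by
    intro c c' hc hcc hcb h i hi
    obtain ⟨j, hj⟩ := (hpos c').1 ⟨by omega, hcb⟩
    exact (hf i j (by omega)).trans (h j hj))
  have hxy : x ≤ y := by
    rcases hax.eq_or_lt with rfl | hlt
    · exact hay
    · refine (hy x hlt hxb).1 fun i hi => ?_
      rw [(hx x hlt hxb).2 le_rfl i hi]
      decide
  refine ⟨x, y, hax, hxy, hyb, fun i => ?_⟩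
  obtain ⟨h1, h2⟩ := (hpos (pos i)).2 ⟨i, rfl⟩
  have eqv : ∀ j, pos j = pos i → f j = f i := fun j hj =>
    le_antisymm (hf _ _ hj.le) (hf _ _ hj.ge)
  have hx0 : f i = 0 ↔ pos i ≤ x := by
    rw [← hx _ h1 h2]
    exact ⟨fun h j hj => (eqv j hj).trans h, fun h => h i rfl⟩
  have hy1 : f i ≤ 1 ↔ pos i ≤ y := by
    rw [← hy _ h1 h2]
    exact ⟨fun h j hj => (eqv j hj).trans_le h, fun h => h i rfl⟩
  unfold thresholdFill
  generalize f i = v at hx0 hy1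
  split_ifs <;> omega

/-- The thresholds of a row filling are unique. -/
theorem thresholdFill_injective {a b x y x' y' : ℤ} (hax : a ≤ x) (hxy : x ≤ y) (hyb : y ≤ b)
    (hax' : a ≤ x') (hxy' : x' ≤ y') (hyb' : y' ≤ b)
    (h : ∀ c, a < c → c ≤ b → thresholdFill x y c = thresholdFill x' y' c) :
    x = x' ∧ y = y' := by
  have key0 : ∀ c, a < c → c ≤ b → (c ≤ x ↔ c ≤ x') := fun c h1 h2 => by
    rw [← thresholdFill_eq_zero (y := y), h c h1 h2, thresholdFill_eq_zero]
  have key1 : ∀ c, a < c → c ≤ b → (c ≤ y ↔ c ≤ y') := fun c h1 h2 => by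
    rw [← thresholdFill_le_one hxy, h c h1 h2, thresholdFill_le_one hxy']
  have := key0 x
  have := key0 x'
  have := key1 y
  have := key1 y'
  omega

/-- A sum of products of minors over pairs of intermediate tuples. -/
theorem det_sum_runWeight {R : Type*} [CommRing R] (w : Fin 3 → ℤ → R) {d : ℕ} (S : Finset ℤ)
    {a b : Fin d → ℤ} (ha : StrictAnti a) (hb : StrictAnti b) :
    Matrix.det (Matrix.of fun i j => ∑ x ∈ S, runWeight (w 0) (a i) x *
        ∑ y ∈ S, runWeight (w 1) x y * runWeight (w 2) y (b j)) =
      ∑ q ∈ ((Fintype.piFinset fun _ : Fin d => S) ×ˢ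
          (Fintype.piFinset fun _ : Fin d => S)).filter
          (fun q => Interlaces a q.1 ∧ Interlaces q.1 q.2 ∧ Interlaces q.2 b),
        ∏ i, (runWeight (w 0) (a i) (q.1 i) *
          (runWeight (w 1) (q.1 i) (q.2 i) * runWeight (w 2) (q.2 i) (b i))) := by
  rw [det_sum_mul_eq_sum_strictAnti S (fun i x => runWeight (w 0) (a i) x)
    (fun x j => ∑ y ∈ S, runWeight (w 1) x y * runWeight (w 2) y (b j)),
    Finset.sum_filter, Finset.sum_filter, Finset.sum_product]
  refine Finset.sum_congr rfl fun x _ => ?_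
  dsimp only
  by_cases hx : Interlaces a x
  · rw [if_pos hx.strictAnti, det_runWeight _ ha hx.strictAnti, if_pos hx,
      det_sum_mul_eq_sum_strictAnti S (fun i y => runWeight (w 1) (x i) y)
        (fun y j => runWeight (w 2) y (b j)), Finset.mul_sum, Finset.sum_filter]
    refine Finset.sum_congr rfl fun y _ => ?_
    by_cases hy : Interlaces x y
    · rw [if_pos hy.strictAnti, det_runWeight _ hx.strictAnti hy.strictAnti,
        det_runWeight _ hy.strictAnti hb]
      simp [hx, hy, Finset.prod_mul_distrib]
    · rw [if_neg (c := Interlaces a x ∧ Interlaces x y ∧ Interlaces y b) fun h => hy h.2.1]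
      split_ifs with hs
      · rw [det_runWeight _ hx.strictAnti hs, if_neg hy, zero_mul, mul_zero]
      · rfl
  · rw [Finset.sum_eq_zero fun y _ => if_neg fun h => hx h.1]
    split_ifs with hs
    · rw [det_runWeight _ ha hs, if_neg hx, zero_mul]
    · rfl

theorem prod_eq_prod_Ioc {R ι : Type*} [CommRing R] [Fintype ι] {a b : ℤ} (pos : ι → ℤ)
    (hinj : Function.Injective pos) (hpos : ∀ c, a < c ∧ c ≤ b ↔ ∃ i, pos i = c) (g : ℤ → R) :
    ∏ i, g (pos i) = ∏ p ∈ Finset.Ioc a b, g p := by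
  have : Finset.Ioc a b = Finset.univ.image pos := by
    ext c
    simp [hpos]
  rw [this, Finset.prod_image hinj.injOn]

/-- The generating function of weakly increasing fillings of a row occupying the positions
`(a, b]`, as an entry of a product of three single-letter transfer matrices. -/
theorem sum_monotone_fill {R ι : Type*} [CommRing R] [Fintype ι] (w : Fin 3 → ℤ → R) {a b : ℤ}
    (hab : a ≤ b) (pos : ι → ℤ) (hinj : Function.Injective pos)
    (hpos : ∀ c, a < c ∧ c ≤ b ↔ ∃ i, pos i = c) (S : Finset ℤ) (hS : Finset.Icc a b ⊆ S) :
    ∑ f ∈ Finset.univ.filter (fun f : ι → Fin 3 => ∀ i j, pos i ≤ pos j → f i ≤ f j),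
        ∏ i, w (f i) (pos i) =
      ∑ x ∈ S, runWeight (w 0) a x * ∑ y ∈ S, runWeight (w 1) x y * runWeight (w 2) y b := by
  have restrict : ∑ x ∈ S, runWeight (w 0) a x *
        ∑ y ∈ S, runWeight (w 1) x y * runWeight (w 2) y b =
      ∑ q ∈ (S ×ˢ S).filter (fun q => a ≤ q.1 ∧ q.1 ≤ q.2 ∧ q.2 ≤ b),
        runWeight (w 0) a q.1 * (runWeight (w 1) q.1 q.2 * runWeight (w 2) q.2 b) := by
    simp only [Finset.mul_sum]
    rw [← Finset.sum_product']
    refine (Finset.sum_filter_of_ne fun q _ hq => ?_).symm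
    by_contra hc
    refine hq ?_
    unfold runWeight
    split_ifs <;> simp_all
  rw [restrict]
  refine (Finset.sum_bij (fun q _ i => thresholdFill q.1 q.2 (pos i)) ?_ ?_ ?_ ?_).symm
  · intro q _
    simp only [Finset.mem_filter, Finset.mem_univ, true_and]
    exact fun i j hij => thresholdFill_mono _ _ hij
  · intro q hq q' hq' heq
    simp only [Finset.mem_filter] at hq hq'
    obtain ⟨h1, h2⟩ := thresholdFill_injective hq.2.1 hq.2.2.1 hq.2.2.2 hq'.2.1 hq'.2.2.1
      hq'.2.2.2 fun c hac hcb => by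
        obtain ⟨i, rfl⟩ := (hpos c).1 ⟨hac, hcb⟩
        exact congrFun heq i
    exact Prod.ext h1 h2
  · intro f hf
    simp only [Finset.mem_filter, Finset.mem_univ, true_and] at hf
    obtain ⟨x, y, hax, hxy, hyb, hfill⟩ := exists_thresholdFill hab pos hpos f hf
    refine ⟨(x, y), ?_, funext hfill⟩
    simp only [Finset.mem_filter, Finset.mem_product]
    exact ⟨⟨hS (Finset.mem_Icc.2 ⟨hax, hxy.trans hyb⟩), hS (Finset.mem_Icc.2 ⟨hax.trans hxy, hyb⟩)⟩,
      hax, hxy, hyb⟩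
  · intro q hq
    simp only [Finset.mem_filter] at hq
    rw [← prod_thresholdFill w hq.2.1 hq.2.2.1 hq.2.2.2]
    exact (prod_eq_prod_Ioc pos hinj hpos fun p => w (thresholdFill q.1 q.2 p) p).symm

theorem Hrow_eq_sum_runWeight {R : Type*} [CommRing R] (z : Fin 3 → ℤ → R) (s a b : ℤ)
    (S : Finset ℤ) (hS : Finset.Icc a b ⊆ S) :
    Hrow z (b - a) (s + 2 * a) =
      ∑ x ∈ S, runWeight (fun p => z 0 (s + 2 * (p - 1))) a x *
        ∑ y ∈ S, runWeight (fun p => z 1 (s + 2 * (p - 1))) x y *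
          runWeight (fun p => z 2 (s + 2 * (p - 1))) y b := by
  unfold Hrow
  split_ifs with h
  · have hab : a ≤ b := by omega
    rw [← sum_monotone_fill (fun i p => z i (s + 2 * (p - 1))) hab
      (fun k : Fin (b - a).toNat => a + 1 + ((k : ℕ) : ℤ)) ?_ ?_ S hS, oneRowSum]
    · refine Finset.sum_congr ?_ fun f _ => Finset.prod_congr rfl fun k _ => ?_
      · ext f
        simp only [Finset.mem_filter, Finset.mem_univ, true_and, add_le_add_iff_left,
          Nat.cast_le, Fin.val_fin_le]
        rfl
      · congr 1
        ring
    · intro k k' hk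
      ext
      simpa using hk
    · intro c
      constructor
      · rintro ⟨h1, h2⟩
        exact ⟨⟨(c - a - 1).toNat, by omega⟩, by simp only; omega⟩
      · rintro ⟨k, rfl⟩
        have := k.2
        omega
  · symm
    refine Finset.sum_eq_zero fun x _ => ?_
    rw [Finset.mul_sum]
    refine Finset.sum_eq_zero fun y _ => ?_
    unfold runWeight
    split_ifs <;> first | omega | simp

theorem StrictAnti.add_sub_le {d : ℕ} {a : Fin d → ℤ} (ha : StrictAnti a) {i j : Fin d}
    (hij : i ≤ j) : a j + ((j : ℕ) - (i : ℕ) : ℤ) ≤ a i := by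
  obtain ⟨j, hj⟩ := j
  induction j with
  | zero =>
    have : i = ⟨0, hj⟩ := le_antisymm hij (Fin.mk_le_of_le_val (Nat.zero_le _))
    subst this
    simp
  | succ n ih =>
    rcases hij.eq_or_lt with rfl | hlt
    · simp
    · have h1 := ih (by omega) (Fin.le_def.2 (Nat.lt_succ_iff.1 (Fin.lt_def.1 hlt)))
      have h2 := ha (show (⟨n, by omega⟩ : Fin d) < ⟨n + 1, hj⟩ from Nat.lt_succ_self n)
      push_cast at h1 ⊢
      omega

theorem Interlaces.add_sub_le {d : ℕ} {a b : Fin d → ℤ} (h : Interlaces a b) {i j : Fin d}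
    (hij : i < j) : b j + ((j : ℕ) - (i : ℕ) : ℤ) ≤ a i := by
  have hlt : (i : ℕ) < j := hij
  have hd := j.2
  have h1 := h.2 i ⟨i + 1, by omega⟩ (Nat.lt_succ_self _)
  have h2 := h.strictAnti.add_sub_le (i := ⟨i + 1, by omega⟩) (j := j) hlt
  push_cast at h2
  omega

/-- Threshold fillings of the rows are column-strict exactly when successive thresholds
interlace. Row `i` occupies the positions `(a i, b i]`, and the cell in column `c` has position
`c - i`. -/
theorem columnStrict_iff_interlaces {d : ℕ} {a x y b : Fin d → ℤ} (ha : StrictAnti a)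
    (hb : StrictAnti b) (hax : ∀ i, a i ≤ x i) (hxy : ∀ i, x i ≤ y i) (hyb : ∀ i, y i ≤ b i) :
    (∀ i j, i < j → ∀ c : ℤ, a i < c - (i : ℕ) → c - (i : ℕ) ≤ b i → a j < c - (j : ℕ) →
        c - (j : ℕ) ≤ b j →
        thresholdFill (x i) (y i) (c - (i : ℕ)) < thresholdFill (x j) (y j) (c - (j : ℕ))) ↔
      Interlaces a x ∧ Interlaces x y ∧ Interlaces y b := by
  constructor
  · intro h
    refine ⟨⟨hax, fun i j hij => ?_⟩, ⟨hxy, fun i j hij => ?_⟩, ⟨hyb, fun i j hij => ?_⟩⟩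
    all_goals
      by_contra hc
      have hlt : (i : ℕ) < j := hij
      have := hb hij
      have := ha.add_sub_le hij.le
      have := hax i
      have := hax j
      have := hxy i
      have := hxy j
      have := hyb i
      have := hyb j
    · have := h i j hij (i + a i + 1) (by omega) (by omega) (by omega) (by omega)
      unfold thresholdFill at this
      split_ifs at this <;> omega
    · have := h i j hij (i + x i + 1) (by omega) (by omega) (by omega) (by omega)
      unfold thresholdFill at this
      split_ifs at this <;> omega
    · have := h i j hij (i + y i + 1) (by omega) (by omega) (by omega) (by omega)
      unfold thresholdFill at this
      split_ifs at this <;> omega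
  · rintro ⟨h1, h2, h3⟩ i j hij c hc1 hc2 hc3 hc4
    have := h1.add_sub_le hij
    have := h2.add_sub_le hij
    have := h3.add_sub_le hij
    unfold thresholdFill
    split_ifs <;> omega

/-- The quantum Jacobi–Trudi formula: for a skew Young diagram `μ/λ` with `d` rows,
the sum over semistandard skew tableaux (rows weakly increasing, columns strictly
increasing) of the products of `z`'s with the appropriate integer spectral shifts equals
the determinant `det (H_{μ_j - λ_k - j + k}(s + 2 λ_k - 2(k-1)))`. Rows and columns of
the diagram are indexed here by `j k : Fin d` (so row `j+1`, column entry `c`). -/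
theorem quantum_jacobi_trudi {R : Type*} [CommRing R] (z : Fin 3 → ℤ → R)
    (d : ℕ) (hd : 0 < d) (μ lam : Fin d → ℤ)
    (hμanti : Antitone μ) (hlamanti : Antitone lam)
    (hμ1 : ∀ j, 1 ≤ μ j) (hlam0 : ∀ j, 0 ≤ lam j)
    (hle : ∀ j, lam j ≤ μ j) (s : ℤ) :
    (∑ tab ∈ Finset.univ.filter
        (fun tab : ∀ j : Fin d, {c : ℤ // c ∈ Finset.Ioc (lam j) (μ j)} → Fin 3 =>
          (∀ j : Fin d, ∀ c c' : {c : ℤ // c ∈ Finset.Ioc (lam j) (μ j)},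
              (c : ℤ) ≤ (c' : ℤ) → tab j c ≤ tab j c') ∧
          (∀ j j' : Fin d, j < j' →
            ∀ (c : {c : ℤ // c ∈ Finset.Ioc (lam j) (μ j)})
              (c' : {c : ℤ // c ∈ Finset.Ioc (lam j') (μ j')}),
              (c : ℤ) = (c' : ℤ) → tab j c < tab j' c')),
        ∏ j : Fin d, ∏ c : {c : ℤ // c ∈ Finset.Ioc (lam j) (μ j)},
          z (tab j c) (s + 2 * ((c : ℤ) - 1) - 2 * ((j : ℕ) : ℤ))) =
      Matrix.det (Matrix.of fun j k : Fin d =>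
        Hrow z (μ j - lam k - ((j : ℕ) : ℤ) + ((k : ℕ) : ℤ))
          (s + 2 * lam k - 2 * ((k : ℕ) : ℤ))) := by
  obtain ⟨a, ha_def⟩ : ∃ a : Fin d → ℤ, a = fun j => lam j - (j : ℕ) := ⟨_, rfl⟩
  obtain ⟨b, hb_def⟩ : ∃ b : Fin d → ℤ, b = fun j => μ j - (j : ℕ) := ⟨_, rfl⟩
  have ha : StrictAnti a := fun i j hij => by
    have := hlamanti hij.le
    have : (i : ℕ) < j := hij
    simp only [ha_def]
    omega
  have hb : StrictAnti b := fun i j hij => by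
    have := hμanti hij.le
    have : (i : ℕ) < j := hij
    simp only [hb_def]
    omega
  have hab : ∀ j, a j ≤ b j := fun j => by
    have := hle j
    simp only [ha_def, hb_def]
    omega
  let w : Fin 3 → ℤ → R := fun i p => z i (s + 2 * (p - 1))
  let S : Finset ℤ := Finset.univ.biUnion fun q : Fin d × Fin d => Finset.Icc (a q.1) (b q.2)
  have hS : ∀ j k, Finset.Icc (a j) (b k) ⊆ S := fun j k =>
    Finset.subset_biUnion_of_mem (fun q : Fin d × Fin d => Finset.Icc (a q.1) (b q.2))
      (Finset.mem_univ (j, k))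
  have hpos : ∀ j : Fin d, ∀ p, a j < p ∧ p ≤ b j ↔
      ∃ c : {c : ℤ // c ∈ Finset.Ioc (lam j) (μ j)}, (c : ℤ) - (j : ℕ) = p := by
    intro j p
    simp only [ha_def, hb_def, Subtype.exists, Finset.mem_Ioc]
    constructor
    · intro h
      exact ⟨p + (j : ℕ), by omega, by omega⟩
    · rintro ⟨c, hc, rfl⟩
      omega
  have hdet : Matrix.det (Matrix.of fun j k : Fin d =>
        Hrow z (μ j - lam k - ((j : ℕ) : ℤ) + ((k : ℕ) : ℤ))
          (s + 2 * lam k - 2 * ((k : ℕ) : ℤ))) =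
      Matrix.det (Matrix.of fun i j => ∑ x ∈ S, runWeight (w 0) (a i) x *
        ∑ y ∈ S, runWeight (w 1) x y * runWeight (w 2) y (b j)) := by
    rw [← Matrix.det_transpose]
    congr 1
    ext i j
    rw [Matrix.transpose_apply, Matrix.of_apply, Matrix.of_apply,
      ← Hrow_eq_sum_runWeight z s (a i) (b j) S (hS i j)]
    congr 1 <;> simp only [ha_def, hb_def] <;> ring
  rw [hdet, det_sum_runWeight w S ha hb]
  let fill (q : (Fin d → ℤ) × (Fin d → ℤ)) (j : Fin d)
      (c : {c : ℤ // c ∈ Finset.Ioc (lam j) (μ j)}) : Fin 3 :=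
    thresholdFill (q.1 j) (q.2 j) ((c : ℤ) - (j : ℕ))
  symm
  refine Finset.sum_bij (fun q _ => fill q) ?_ ?_ ?_ ?_
  · intro q hq
    simp only [Finset.mem_filter, Finset.mem_univ, true_and] at hq ⊢
    obtain ⟨-, h1, h2, h3⟩ := hq
    refine ⟨fun j c c' hc => thresholdFill_mono _ _ (by omega), ?_⟩
    rintro i j hij c ⟨c', hc'⟩ rfl
    have hi := (hpos i _).2 ⟨c, rfl⟩
    have hj := (hpos j _).2 ⟨⟨c, hc'⟩, rfl⟩
    exact (columnStrict_iff_interlaces ha hb h1.1 h2.1 h3.1).2 ⟨h1, h2, h3⟩ i j hij c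
      hi.1 hi.2 hj.1 hj.2
  · intro q hq q' hq' heq
    simp only [Finset.mem_filter] at hq hq'
    obtain ⟨-, h1, h2, h3⟩ := hq
    obtain ⟨-, h1', h2', h3'⟩ := hq'
    have key : ∀ j, q.1 j = q'.1 j ∧ q.2 j = q'.2 j := fun j =>
      thresholdFill_injective (h1.1 j) (h2.1 j) (h3.1 j) (h1'.1 j) (h2'.1 j) (h3'.1 j)
        fun p hp1 hp2 => by
          obtain ⟨c, rfl⟩ := (hpos j p).1 ⟨hp1, hp2⟩
          exact congrFun (congrFun heq j) c
    exact Prod.ext (funext fun j => (key j).1) (funext fun j => (key j).2)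
  · intro tab htab
    simp only [Finset.mem_filter, Finset.mem_univ, true_and] at htab
    choose x y hax hxy hyb hfill using fun j =>
      exists_thresholdFill (hab j) _ (hpos j) (tab j) fun c c' hc => htab.1 j c c' (by omega)
    refine ⟨(x, y), ?_, funext fun j => funext (hfill j)⟩
    simp only [Finset.mem_filter, Finset.mem_product, Fintype.mem_piFinset]
    refine ⟨⟨fun j => hS j j (Finset.mem_Icc.2 ⟨hax j, (hxy j).trans (hyb j)⟩),
      fun j => hS j j (Finset.mem_Icc.2 ⟨(hax j).trans (hxy j), hyb j⟩)⟩, ?_⟩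
    refine (columnStrict_iff_interlaces ha hb hax hxy hyb).1 fun i j hij c h1 h2 h3 h4 => ?_
    obtain ⟨ci, hci⟩ := (hpos i _).1 ⟨h1, h2⟩
    obtain ⟨cj, hcj⟩ := (hpos j _).1 ⟨h3, h4⟩
    rw [← hci, ← hcj, hfill, hfill]
    exact htab.2 i j hij ci cj (by omega)
  · intro q hq
    simp only [Finset.mem_filter] at hq
    obtain ⟨-, h1, h2, h3⟩ := hq
    refine Finset.prod_congr rfl fun j _ => ?_
    rw [← prod_thresholdFill w (h1.1 j) (h2.1 j) (h3.1 j),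
      ← prod_eq_prod_Ioc (fun c : {c : ℤ // c ∈ Finset.Ioc (lam j) (μ j)} => (c : ℤ) - (j : ℕ))
        (fun c c' h => Subtype.ext (by simpa using h)) (hpos j)
        fun p => w (thresholdFill (q.1 j) (q.2 j) p) p]
    refine Finset.prod_congr rfl fun c _ => ?_
    simp only [w]
    congr 1
    ring

end
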